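/- Let q be a prime power and let v, d, k be integers with d even, 2 ≤ d/2 ≤ k ≤ v/2, and d ≤ k < 3d/2. Let C be a (v,#C,d;k)_q constant dimension code that contains a (v,d;k)_q lifted MRD code. Then #C ≤ q^{(v−k)(k−d/2+1)} + A_q(v−k, 3d−2k; d) + [v−k choose d/2]_q · [k choose d−1]_q · q^{(k−d+1)(v−k−d/2)} / [k−d/2 choose d/2−1]_q. -/

import Mathlib

open Module

/-- The subspace of `F_q^v` of vectors whose first `k` coordinates vanish
(denoted `Γ` in the paper); its complement (as a set of vectors) is `Δ`. -/
def Gamma (K : Type) [Field K] (k v : ℕ) : Submodule K (Fin v → K) where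
  carrier := {x | ∀ j : Fin v, (j : ℕ) < k → x j = 0}
  add_mem' := by
    intro a b ha hb j hj
    simp [ha j hj, hb j hj]
  zero_mem' := by
    intro j hj
    rfl
  smul_mem' := by
    intro c x hx j hj
    simp [hx j hj]

/-- The subspace distance `d_S(U,W) = dim(U+W) - dim(U ∩ W)`. -/
noncomputable def sDist {K : Type} [Field K] {v : ℕ}
    (U W : Submodule K (Fin v → K)) : ℕ :=
  finrank K ↥(U ⊔ W) - finrank K ↥(U ⊓ W)

/-- A constant dimension code of dimension `k` and minimum subspace distance `d`. -/
def IsCDC (K : Type) [Field K] (v : ℕ) (d k : ℤ)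
    (C : Set (Submodule K (Fin v → K))) : Prop :=
  (∀ U ∈ C, (finrank K U : ℤ) = k) ∧
  ∀ U ∈ C, ∀ W ∈ C, U ≠ W → d ≤ (sDist U W : ℤ)

/-- `A_q(v,d;k)`: the maximum cardinality of a `(v,M,d;k)_q` CDC. -/
noncomputable def Amax (K : Type) [Field K] (v : ℕ) (d k : ℤ) : ℕ :=
  sSup {n | ∃ C : Set (Submodule K (Fin v → K)), IsCDC K v d k C ∧ C.ncard = n}

/-- Row `i` of the `k × v` matrix `(I_k | A)`. -/
def liftRow {K : Type} [Field K] {k v : ℕ} (A : Matrix (Fin k) (Fin (v - k)) K)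
    (i : Fin k) : Fin v → K := fun j =>
  if (j : ℕ) < k then (if (i : ℕ) = (j : ℕ) then 1 else 0)
  else if h2 : (j : ℕ) - k < v - k then A i ⟨(j : ℕ) - k, h2⟩ else 0

/-- `M` is a `(v,d;k)_q` lifted MRD code: `M = { rowspan (I_k | A) : A ∈ R }`
for a `[k × (v-k), q^((v-k)(k-d/2+1)), d/2]_q` rank metric code `R`. -/
def IsLMRD (q : ℕ) (K : Type) [Field K] (v d k : ℕ)
    (M : Set (Submodule K (Fin v → K))) : Prop :=
  ∃ R : Set (Matrix (Fin k) (Fin (v - k)) K),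
    R.ncard = q ^ ((v - k) * (k - d / 2 + 1)) ∧
    (∀ A ∈ R, ∀ B ∈ R, A ≠ B → d / 2 ≤ (A - B).rank) ∧
    M = {U | ∃ A ∈ R, U = Submodule.span K (Set.range (liftRow A))}

/-- The Gaussian binomial coefficient `[a choose b]_q`, defined to be `0`
unless `0 ≤ b ≤ a`. -/
noncomputable def qBin (q : ℕ) (a b : ℤ) : ℚ :=
  if 0 ≤ b ∧ b ≤ a then
    ∏ i ∈ Finset.range b.toNat,
      ((q : ℚ) ^ a - (q : ℚ) ^ (i : ℤ)) / ((q : ℚ) ^ b - (q : ℚ) ^ (i : ℤ))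
  else 0

/-- `[[w, u; c]]_q = q^(u*c) * [w-u choose c]_q` for `0 ≤ c ≤ w-u`, else `0`. -/
noncomputable def qBinD (q : ℕ) (w u c : ℤ) : ℚ :=
  if 0 ≤ c ∧ c ≤ w - u then (q : ℚ) ^ (u * c) * qBin q (w - u) c else 0

lemma exists_le_finrank_eq {K V : Type*} [Field K] [AddCommGroup V] [Module K V]
    {U : Submodule K V} {a : ℕ} (h : a ≤ finrank K U) :
    ∃ E ≤ U, finrank K E = a := by
  obtain ⟨t, ht⟩ := exists_linearIndependent_of_le_finrank h
  refine ⟨(Submodule.span K (Set.range t)).map U.subtype, Submodule.map_subtype_le _ _, ?_⟩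
  rw [Submodule.finrank_map_subtype_eq, finrank_span_eq_card ht, Fintype.card_fin]

section Counting

variable {K V V' : Type*} [Field K] [AddCommGroup V] [Module K V] [FiniteDimensional K V]
  [AddCommGroup V'] [Module K V']

lemma finrank_map_add_finrank_inf_ker (f : V →ₗ[K] V') (U : Submodule K V) :
    finrank K (U.map f) + finrank K ↥(U ⊓ LinearMap.ker f) = finrank K U := by
  have h := LinearMap.finrank_range_add_finrank_ker (f.domRestrict U)
  rw [LinearMap.range_domRestrict, LinearMap.ker_domRestrict] at h
  rw [← h]
  congr 1
  rw [← Submodule.finrank_map_subtype_eq U ((LinearMap.ker f).comap U.subtype),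
    Submodule.map_comap_subtype]

lemma le_finrank_of_linearIndependent_mem {m : ℕ} {U : Submodule K V} {t : Fin m → V}
    (ht : LinearIndependent K t) (hU : ∀ i, t i ∈ U) : m ≤ finrank K U := by
  have h : Submodule.span K (Set.range t) ≤ U := by
    rw [Submodule.span_le]
    rintro _ ⟨i, rfl⟩
    exact hU i
  simpa [finrank_span_eq_card ht] using Submodule.finrank_mono h

lemma add_le_finrank_of_linearIndependent [FiniteDimensional K V'] (f : V →ₗ[K] V') {a m : ℕ}
    {U : Submodule K V} {s : Fin a → V} {t : Fin m → V} (hs : LinearIndependent K s)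
    (hsU : ∀ i, s i ∈ U ⊓ LinearMap.ker f) (ht : LinearIndependent K (f ∘ t))
    (htU : ∀ i, t i ∈ U) : a + m ≤ finrank K U := by
  have h1 := le_finrank_of_linearIndependent_mem hs hsU
  have h2 : m ≤ finrank K (U.map f) :=
    le_finrank_of_linearIndependent_mem ht fun i => Submodule.mem_map_of_mem (htU i)
  have h3 := finrank_map_add_finrank_inf_ker f U
  omega

/-- Tuples in `V` with independent images correspond to independent tuples of the range together
with tuples of the kernel. -/
noncomputable def linearIndependentCompEquiv (f : V →ₗ[K] V') (m : ℕ)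
    (g : LinearMap.range f →ₗ[K] V) (hg : ∀ y, f (g y) = y) :
    {t : Fin m → V // LinearIndependent K (f ∘ t)} ≃
      {s : Fin m → LinearMap.range f // LinearIndependent K s} × (Fin m → LinearMap.ker f) where
  toFun t := (⟨f.rangeRestrict ∘ t.1,
      LinearIndependent.of_comp (LinearMap.range f).subtype t.2⟩,
    fun i => ⟨t.1 i - g (f.rangeRestrict (t.1 i)), by
      simp only [LinearMap.mem_ker, map_sub, hg]
      exact sub_self _⟩)
  invFun p := ⟨fun i => g (p.1.1 i) + p.2 i, by
    have h : (f ∘ fun i => g (p.1.1 i) + (p.2 i : V)) = (LinearMap.range f).subtype ∘ p.1.1 := by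
      funext i
      simp [hg]
    rw [h]
    exact p.1.2.map' _ (Submodule.ker_subtype _)⟩
  left_inv t := by
    ext i
    simp
  right_inv p := by
    have h : ∀ i, f.rangeRestrict (g (p.1.1 i) + (p.2 i : V)) = p.1.1 i := by
      intro i
      apply Subtype.ext
      change f (g (p.1.1 i) + (p.2 i : V)) = p.1.1 i
      simp [hg]
    ext i
    · simpa using congrArg Subtype.val (h i)
    · simp [h]

lemma card_linearIndependent_comp [Fintype K] (f : V →ₗ[K] V') {m : ℕ}
    (hm : m + finrank K (LinearMap.ker f) ≤ finrank K V) :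
    (Nat.card {t : Fin m → V // LinearIndependent K (f ∘ t)} : ℚ) =
      ∏ i ∈ Finset.range m, ((Fintype.card K : ℚ) ^ finrank K V -
        (Fintype.card K : ℚ) ^ (finrank K (LinearMap.ker f) + i)) := by
  have : Finite (LinearMap.range f) := Module.finite_of_finite K
  obtain ⟨g, hg⟩ := f.rangeRestrict.exists_rightInverse_of_surjective f.range_rangeRestrict
  have hrk := LinearMap.finrank_range_add_finrank_ker f
  have hg' : ∀ y, f (g y) = y := fun y => congrArg Subtype.val (LinearMap.congr_fun hg y)
  rw [Nat.card_congr (linearIndependentCompEquiv f m g hg'), Nat.card_prod,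
    card_linearIndependent (by omega), Nat.card_fun, Nat.card_fin,
    Module.natCard_eq_pow_finrank (K := K) (V := LinearMap.ker f), Nat.card_eq_fintype_card,
    ← hrk, Nat.cast_mul, Nat.cast_prod,
    Fin.prod_univ_eq_prod_range (fun i => (((Fintype.card K) ^ finrank K (LinearMap.range f) -
      (Fintype.card K) ^ i : ℕ) : ℚ)), Nat.cast_pow,
    ← Finset.card_range m, ← Finset.prod_const, Finset.card_range, ← Finset.prod_mul_distrib]
  refine Finset.prod_congr rfl fun i hi => ?_
  rw [Finset.mem_range] at hi
  rw [Nat.cast_sub (Nat.pow_le_pow_right Fintype.card_pos (by omega))]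
  push_cast
  ring

lemma card_linearIndependent_comp_mem [Fintype K] (f : V →ₗ[K] V') (U : Submodule K V) {m : ℕ}
    (hm : m + finrank K ↥(U ⊓ LinearMap.ker f) ≤ finrank K U) :
    (Nat.card {t : Fin m → V // (∀ i, t i ∈ U) ∧ LinearIndependent K (f ∘ t)} : ℚ) =
      ∏ i ∈ Finset.range m, ((Fintype.card K : ℚ) ^ finrank K U -
        (Fintype.card K : ℚ) ^ (finrank K ↥(U ⊓ LinearMap.ker f) + i)) := by
  have hk : finrank K (LinearMap.ker (f.domRestrict U)) = finrank K ↥(U ⊓ LinearMap.ker f) := by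
    rw [LinearMap.ker_domRestrict,
      ← Submodule.finrank_map_subtype_eq U ((LinearMap.ker f).comap U.subtype),
      Submodule.map_comap_subtype]
  rw [← hk] at hm ⊢
  rw [← card_linearIndependent_comp _ hm]
  congr 1
  exact Nat.card_congr
    { toFun := fun t => ⟨fun i => ⟨t.1 i, t.2.1 i⟩, t.2.2⟩
      invFun := fun t => ⟨fun i => t.1 i, fun i => (t.1 i).2, t.2⟩
      left_inv := fun t => rfl
      right_inv := fun t => rfl }

/-- Pairs of an independent `a`-tuple in `U ⊓ ker f` and an `m`-tuple in `U` with independent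
image under `f`. -/
def adaptedTuples (f : V →ₗ[K] V') (a m : ℕ) (U : Submodule K V) :
    Set ((Fin a → V) × (Fin m → V)) :=
  {s | (∀ i, s i ∈ U ⊓ LinearMap.ker f) ∧ LinearIndependent K s} ×ˢ
    {t | (∀ i, t i ∈ U) ∧ LinearIndependent K (f ∘ t)}

lemma ncard_adaptedTuples [Fintype K] (f : V →ₗ[K] V') {a m : ℕ} (U : Submodule K V)
    (ha : a ≤ finrank K ↥(U ⊓ LinearMap.ker f))
    (hm : m + finrank K ↥(U ⊓ LinearMap.ker f) ≤ finrank K U) :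
    ((adaptedTuples f a m U).ncard : ℚ) =
      (∏ i ∈ Finset.range a, ((Fintype.card K : ℚ) ^ finrank K ↥(U ⊓ LinearMap.ker f) -
        (Fintype.card K : ℚ) ^ i)) *
      ∏ i ∈ Finset.range m, ((Fintype.card K : ℚ) ^ finrank K U -
        (Fintype.card K : ℚ) ^ (finrank K ↥(U ⊓ LinearMap.ker f) + i)) := by
  have h0 : finrank K ↥(U ⊓ LinearMap.ker f ⊓ LinearMap.ker (LinearMap.id : V →ₗ[K] V)) = 0 := by
    rw [LinearMap.ker_id, inf_bot_eq, finrank_bot]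
  have h := card_linearIndependent_comp_mem (LinearMap.id : V →ₗ[K] V) (U ⊓ LinearMap.ker f)
    (m := a) (by omega)
  simp only [h0, zero_add, LinearMap.id_coe, Function.id_comp] at h
  rw [← h, ← card_linearIndependent_comp_mem f U hm, adaptedTuples, Set.ncard_prod]
  push_cast
  rfl

end Counting

section Numeric

lemma prod_pow_sub_pow_pos {q : ℚ} (hq : 1 < q) {n b c : ℕ} (h : c + b ≤ n) :
    0 < ∏ i ∈ Finset.range b, (q ^ n - q ^ (c + i)) := by
  refine Finset.prod_pos fun i hi => ?_
  rw [Finset.mem_range] at hi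
  exact sub_pos.2 (pow_lt_pow_right₀ hq (by omega))

lemma prod_pow_add_sub_pow_add (q : ℚ) (n b c : ℕ) :
    ∏ i ∈ Finset.range b, (q ^ (c + n) - q ^ (c + i)) =
      q ^ (c * b) * ∏ i ∈ Finset.range b, (q ^ n - q ^ i) := by
  rw [pow_mul, ← Finset.card_range b, ← Finset.prod_const, Finset.card_range,
    ← Finset.prod_mul_distrib]
  exact Finset.prod_congr rfl fun i _ => by ring

lemma adapted_count_le_succ {q : ℚ} (hq : 2 ≤ q) {a m k g : ℕ} (ha : 1 ≤ a) (hag : a ≤ g)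
    (hgm : g + m + 1 ≤ k) :
    (∏ i ∈ Finset.range a, (q ^ g - q ^ i)) * ∏ i ∈ Finset.range m, (q ^ k - q ^ (g + i)) ≤
      (∏ i ∈ Finset.range a, (q ^ (g + 1) - q ^ i)) *
        ∏ i ∈ Finset.range m, (q ^ k - q ^ (g + 1 + i)) := by
  have hq1 : 1 < q := by linarith
  have hA : 0 < ∏ i ∈ Finset.range a, (q ^ g - q ^ i) := by
    simpa using prod_pow_sub_pow_pos hq1 (c := 0) (by omega : 0 + a ≤ g)
  have hB := prod_pow_sub_pow_pos hq1 (by omega : g + m ≤ k)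
  have hD : 0 < q ^ k - q ^ g := sub_pos.2 (pow_lt_pow_right₀ hq1 (by omega))
  have hE : 0 < q ^ k - q ^ (g + m) := sub_pos.2 (pow_lt_pow_right₀ hq1 (by omega))
  have hAA : q * ∏ i ∈ Finset.range a, (q ^ g - q ^ i) ≤
      ∏ i ∈ Finset.range a, (q ^ (g + 1) - q ^ i) := by
    calc q * ∏ i ∈ Finset.range a, (q ^ g - q ^ i)
        ≤ q ^ a * ∏ i ∈ Finset.range a, (q ^ g - q ^ i) := by
          gcongr
          exact le_self_pow₀ hq1.le (by omega)
      _ = ∏ i ∈ Finset.range a, (q * (q ^ g - q ^ i)) := by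
          rw [Finset.prod_mul_distrib, Finset.prod_const, Finset.card_range]
      _ ≤ _ := by
          refine Finset.prod_le_prod (fun i hi => ?_) fun i hi => ?_
          · rw [Finset.mem_range] at hi
            have := pow_le_pow_right₀ hq1.le (by omega : i ≤ g)
            exact mul_nonneg (by linarith) (by linarith)
          · have : q ^ i ≤ q ^ (i + 1) := pow_le_pow_right₀ hq1.le (by omega)
            rw [mul_sub, ← pow_succ', ← pow_succ']
            linarith
  have hBB : (∏ i ∈ Finset.range m, (q ^ k - q ^ (g + 1 + i))) * (q ^ k - q ^ g) =
      (∏ i ∈ Finset.range m, (q ^ k - q ^ (g + i))) * (q ^ k - q ^ (g + m)) := by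
    rw [← Finset.prod_range_succ, Finset.prod_range_succ' _ m]
    simp [add_comm, add_left_comm]
  have hDE : q ^ k - q ^ g ≤ q * (q ^ k - q ^ (g + m)) := by
    have h1 : q * q ^ (g + m) ≤ q ^ k := by
      rw [← pow_succ']
      exact pow_le_pow_right₀ hq1.le (by omega)
    have h2 : 2 * q ^ k ≤ q * q ^ k := by gcongr
    have h3 : 0 < q ^ g := by positivity
    linarith
  refine le_of_mul_le_mul_right ?_ hD
  calc _ ≤ ((∏ i ∈ Finset.range a, (q ^ g - q ^ i)) *
          ∏ i ∈ Finset.range m, (q ^ k - q ^ (g + i))) * (q * (q ^ k - q ^ (g + m))) := by gcongr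
    _ = (q * ∏ i ∈ Finset.range a, (q ^ g - q ^ i)) *
          ((∏ i ∈ Finset.range m, (q ^ k - q ^ (g + i))) * (q ^ k - q ^ (g + m))) := by ring
    _ ≤ (∏ i ∈ Finset.range a, (q ^ (g + 1) - q ^ i)) *
          ((∏ i ∈ Finset.range m, (q ^ k - q ^ (g + i))) * (q ^ k - q ^ (g + m))) := by gcongr
    _ = _ := by rw [← hBB, mul_assoc]

lemma adapted_count_le {q : ℚ} (hq : 2 ≤ q) {a m k g : ℕ} (ha : 1 ≤ a) (hag : a ≤ g)
    (hgm : g + m ≤ k) :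
    (∏ i ∈ Finset.range a, (q ^ a - q ^ i)) * ∏ i ∈ Finset.range m, (q ^ k - q ^ (a + i)) ≤
      (∏ i ∈ Finset.range a, (q ^ g - q ^ i)) *
        ∏ i ∈ Finset.range m, (q ^ k - q ^ (g + i)) := by
  induction g, hag using Nat.le_induction with
  | base => exact le_rfl
  | succ g hg ih => exact (ih (by omega)).trans (adapted_count_le_succ hq ha hg (by omega))

lemma qBin_natCast (q : ℕ) {a b : ℕ} (h : b ≤ a) :
    qBin q a b = (∏ i ∈ Finset.range b, ((q : ℚ) ^ a - (q : ℚ) ^ i)) /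
      ∏ i ∈ Finset.range b, ((q : ℚ) ^ b - (q : ℚ) ^ i) := by
  rw [qBin, if_pos (by omega), ← Finset.prod_div_distrib]
  simp

lemma qBin_symm {q : ℕ} (hq : 2 ≤ q) (b c : ℕ) :
    qBin q ((b + c : ℕ) : ℤ) b = qBin q ((b + c : ℕ) : ℤ) c := by
  have hq1 : (1 : ℚ) < q := by exact_mod_cast hq
  have hpos : ∀ n : ℕ, (∏ i ∈ Finset.range n, ((q : ℚ) ^ n - (q : ℚ) ^ i)) ≠ 0 := fun n => by
    simpa using (prod_pow_sub_pow_pos hq1 (c := 0) (by omega : 0 + n ≤ n)).ne'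
  have hsplit : ∀ s t : ℕ, (∏ i ∈ Finset.range (s + t), ((q : ℚ) ^ (s + t) - (q : ℚ) ^ i)) =
      (∏ i ∈ Finset.range s, ((q : ℚ) ^ (s + t) - (q : ℚ) ^ i)) *
        ((q : ℚ) ^ (s * t) * ∏ i ∈ Finset.range t, ((q : ℚ) ^ t - (q : ℚ) ^ i)) := fun s t => by
    rw [Finset.prod_range_add, prod_pow_add_sub_pow_add]
  rw [qBin_natCast q (by omega), qBin_natCast q (by omega), div_eq_div_iff (hpos b) (hpos c)]
  have h1 := hsplit b c
  have h2 := hsplit c b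
  rw [add_comm c b] at h2
  rw [h1, mul_comm c b] at h2
  have h3 : (q : ℚ) ^ (b * c) ≠ 0 := by positivity
  refine mul_left_cancel₀ h3 ?_
  linear_combination h2

lemma adapted_count_ratio {q : ℕ} (hq : 2 ≤ q) (a e w : ℕ) :
    qBin q ((a + 1 + w : ℕ) : ℤ) ((a + 1 : ℕ) : ℤ) *
        qBin q ((2 * a + 1 + (e + 1) : ℕ) : ℤ) ((2 * a + 1 : ℕ) : ℤ) *
        (q : ℚ) ^ ((e + 1) * w) / qBin q ((a + (e + 1) : ℕ) : ℤ) (a : ℤ) =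
      ((∏ i ∈ Finset.range (a + 1), ((q : ℚ) ^ (a + 1 + w) - (q : ℚ) ^ i)) *
        ∏ i ∈ Finset.range (e + 1),
          ((q : ℚ) ^ (a + 1 + w + (2 * a + 1 + (e + 1))) - (q : ℚ) ^ (a + 1 + w + i))) /
      ((∏ i ∈ Finset.range (a + 1), ((q : ℚ) ^ (a + 1) - (q : ℚ) ^ i)) *
        ∏ i ∈ Finset.range (e + 1),
          ((q : ℚ) ^ (a + 1 + (a + (e + 1))) - (q : ℚ) ^ (a + 1 + i))) := by
  have hq1 : (1 : ℚ) < q := by exact_mod_cast hq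
  have hpos : ∀ n b : ℕ, b ≤ n → (∏ i ∈ Finset.range b, ((q : ℚ) ^ n - (q : ℚ) ^ i)) ≠ 0 :=
    fun n b h => by simpa using (prod_pow_sub_pow_pos hq1 (c := 0) (by omega : 0 + b ≤ n)).ne'
  rw [qBin_symm hq (2 * a + 1) (e + 1), qBin_symm hq a (e + 1), prod_pow_add_sub_pow_add,
    prod_pow_add_sub_pow_add, qBin_natCast q (by omega), qBin_natCast q (by omega),
    qBin_natCast q (by omega)]
  have h1 := hpos (a + 1) (a + 1) le_rfl
  have h2 := hpos (e + 1) (e + 1) le_rfl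
  have h3 := hpos (a + (e + 1)) (e + 1) (by omega)
  have h4 : (q : ℚ) ≠ 0 := by positivity
  field_simp
  ring

end Numeric

section Codes

variable {K : Type} [Field K]

lemma two_mul_finrank_inf_add_sDist {v : ℕ} (U W : Submodule K (Fin v → K)) :
    2 * finrank K ↥(U ⊓ W) + sDist U W = finrank K U + finrank K W := by
  have h := Submodule.finrank_sup_add_finrank_inf_eq U W
  have h' := Submodule.finrank_mono (inf_le_left.trans le_sup_left : U ⊓ W ≤ U ⊔ W)
  rw [sDist]
  omega

lemma IsCDC.two_mul_finrank_inf_le {v d k : ℕ} {C : Set (Submodule K (Fin v → K))}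
    (hC : IsCDC K v d k C) {U W : Submodule K (Fin v → K)} (hU : U ∈ C) (hW : W ∈ C)
    (h : U ≠ W) : 2 * finrank K ↥(U ⊓ W) + d ≤ 2 * k := by
  have h1 := hC.1 U hU
  have h2 := hC.1 W hW
  have h3 := hC.2 U hU W hW h
  have h4 := two_mul_finrank_inf_add_sDist U W
  omega

lemma ncard_le_Amax [Finite K] {v : ℕ} {d k : ℤ} {C : Set (Submodule K (Fin v → K))}
    (hC : IsCDC K v d k C) : C.ncard ≤ Amax K v d k := by
  refine le_csSup ⟨Nat.card (Submodule K (Fin v → K)), ?_⟩ ⟨C, hC, rfl⟩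
  rintro _ ⟨D, -, rfl⟩
  rw [← Set.ncard_univ]
  exact Set.ncard_le_ncard (Set.subset_univ D)

/-- Codewords meeting a fixed subspace `G` in dimension at least `a` yield a code in `G` of
dimension `a`. -/
lemma ncard_le_Amax_of_le_finrank_inf [Finite K] {V : Type*} [AddCommGroup V] [Module K V]
    [FiniteDimensional K V] {n a : ℕ} {D : ℤ} {G : Submodule K V} (hG : finrank K G = n)
    {C : Set (Submodule K V)} (hmeet : ∀ U ∈ C, a ≤ finrank K ↥(U ⊓ G))
    (hdist : ∀ U ∈ C, ∀ W ∈ C, U ≠ W → D + 2 * finrank K ↥(U ⊓ W) ≤ 2 * a)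
    (hlt : ∀ U ∈ C, ∀ W ∈ C, U ≠ W → finrank K ↥(U ⊓ W) < a) :
    C.ncard ≤ Amax K n D a := by
  classical
  let e : G ≃ₗ[K] (Fin n → K) := LinearEquiv.ofFinrankEq _ _ (by simp [hG])
  choose! E hEle hE using fun U hU => exists_le_finrank_eq (hmeet U hU)
  let F : Submodule K V → Submodule K (Fin n → K) := fun U =>
    ((E U).comap G.subtype).map (e : G →ₗ[K] (Fin n → K))
  have hcomap : ∀ S : Submodule K V, S ≤ G →
      finrank K ((S.comap G.subtype).map (e : G →ₗ[K] (Fin n → K))) = finrank K S :=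
    fun S hS => by
      rw [LinearEquiv.finrank_map_eq, ← Submodule.finrank_map_subtype_eq G,
        Submodule.map_comap_subtype, inf_eq_right.2 hS]
  have hF : ∀ U ∈ C, finrank K (F U) = a := fun U hU => by
    rw [← hE U hU]
    exact hcomap _ ((hEle U hU).trans inf_le_right)
  have hinf : ∀ U ∈ C, ∀ W ∈ C, finrank K ↥(F U ⊓ F W) ≤ finrank K ↥(U ⊓ W) :=
    fun U hU W hW => by
      have h : F U ⊓ F W = ((E U ⊓ E W).comap G.subtype).map (e : G →ₗ[K] (Fin n → K)) := by
        rw [Submodule.comap_inf, Submodule.map_inf _ e.injective]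
      rw [h, hcomap _ (inf_le_left.trans ((hEle U hU).trans inf_le_right))]
      exact Submodule.finrank_mono
        (inf_le_inf ((hEle U hU).trans inf_le_left) ((hEle W hW).trans inf_le_left))
  have hinj : Set.InjOn F C := by
    intro U hU W hW h
    by_contra hne
    have h1 := hinf U hU W hW
    rw [← h, inf_idem, hF U hU] at h1
    exact absurd (hlt U hU W hW hne) (by omega)
  rw [← hinj.ncard_image]
  refine ncard_le_Amax ⟨?_, ?_⟩
  · rintro _ ⟨U, hU, rfl⟩
    exact_mod_cast hF U hU
  · rintro _ ⟨U, hU, rfl⟩ _ ⟨W, hW, rfl⟩ hne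
    have h1 := two_mul_finrank_inf_add_sDist (F U) (F W)
    rw [hF U hU, hF W hW] at h1
    have h2 := hinf U hU W hW
    have h3 := hdist U hU W hW fun h => hne (h ▸ rfl)
    omega

lemma ncard_mul_le_ncard_adaptedTuples [Fintype K] {V V' : Type*} [AddCommGroup V] [Module K V]
    [FiniteDimensional K V] [AddCommGroup V'] [Module K V'] [FiniteDimensional K V']
    (f : V →ₗ[K] V') {a m k : ℕ} (ha : 1 ≤ a) {C : Set (Submodule K V)}
    (hk : ∀ U ∈ C, finrank K U = k) (hle : ∀ U ∈ C, a ≤ finrank K ↥(U ⊓ LinearMap.ker f))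
    (hge : ∀ U ∈ C, finrank K ↥(U ⊓ LinearMap.ker f) + m ≤ k)
    (hlt : ∀ U ∈ C, ∀ W ∈ C, U ≠ W → finrank K ↥(U ⊓ W) < a + m) :
    (C.ncard : ℚ) * ((∏ i ∈ Finset.range a, ((Fintype.card K : ℚ) ^ a - (Fintype.card K : ℚ) ^ i)) *
      ∏ i ∈ Finset.range m, ((Fintype.card K : ℚ) ^ k - (Fintype.card K : ℚ) ^ (a + i))) ≤
      ((adaptedTuples f a m ⊤).ncard : ℚ) := by
  classical
  have : Finite V := Module.finite_of_finite K
  have hCf : C.Finite := Set.toFinite C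
  have hq : (2 : ℚ) ≤ Fintype.card K := by exact_mod_cast Fintype.one_lt_card (α := K)
  have hfin : ∀ U : Submodule K V, (adaptedTuples f a m U).Finite := fun U => Set.toFinite _
  have hdisj : ((hCf.toFinset : Set (Submodule K V))).PairwiseDisjoint
      fun U => (hfin U).toFinset := by
    intro U hU W hW hne
    rw [Set.Finite.coe_toFinset] at hU hW
    rw [Function.onFun, Finset.disjoint_left]
    intro p hp hp'
    rw [Set.Finite.mem_toFinset] at hp hp'
    refine absurd (hlt U hU W hW hne) (not_lt.2 ?_)
    exact add_le_finrank_of_linearIndependent f hp.1.2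
      (fun i => ⟨⟨(hp.1.1 i).1, (hp'.1.1 i).1⟩, (hp.1.1 i).2⟩) hp.2.2
      fun i => ⟨hp.2.1 i, hp'.2.1 i⟩
  have hsub : (hCf.toFinset.biUnion fun U => (hfin U).toFinset) ⊆ (hfin ⊤).toFinset := by
    intro p hp
    rw [Finset.mem_biUnion] at hp
    obtain ⟨U, -, hp⟩ := hp
    rw [Set.Finite.mem_toFinset] at hp ⊢
    exact ⟨⟨fun i => ⟨trivial, (hp.1.1 i).2⟩, hp.1.2⟩, fun i => trivial, hp.2.2⟩
  have hcard := Finset.card_le_card hsub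
  rw [Finset.card_biUnion hdisj, ← Set.ncard_eq_toFinset_card] at hcard
  rw [Set.ncard_eq_toFinset_card C hCf, ← nsmul_eq_mul]
  refine le_trans ?_ (Nat.cast_le.2 hcard)
  rw [Nat.cast_sum]
  refine Finset.card_nsmul_le_sum _ _ _ fun U hU => ?_
  rw [Set.Finite.mem_toFinset] at hU
  have h := hge U hU
  rw [← Set.ncard_eq_toFinset_card,
    ncard_adaptedTuples f U (hle U hU) (by rw [hk U hU]; omega), hk U hU]
  exact adapted_count_le hq ha (hle U hU) h

end Codes

section Lifted

variable {K : Type} [Field K] {k v : ℕ}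

/-- The projection of `F_q^v` to its first `k` coordinates. -/
def headProj (K : Type) [Field K] (h : k ≤ v) : (Fin v → K) →ₗ[K] (Fin k → K) :=
  LinearMap.funLeft K K (Fin.castLE h)

/-- The projection of `F_q^v` to its last `v - k` coordinates. -/
def tailProj (K : Type) [Field K] (k v : ℕ) : (Fin v → K) →ₗ[K] (Fin (v - k) → K) :=
  LinearMap.funLeft K K fun j => ⟨k + j, by omega⟩

lemma finrank_ker_headProj (h : k ≤ v) : finrank K (LinearMap.ker (headProj K h)) = v - k := by
  have h1 := LinearMap.finrank_range_add_finrank_ker (headProj K h)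
  have hs : Function.Surjective (headProj K h) :=
    LinearMap.funLeft_surjective_of_injective K K _ (Fin.castLE_injective h)
  rw [LinearMap.range_eq_top.2 hs] at h1
  simp only [finrank_top, finrank_fintype_fun_eq_card, Fintype.card_fin] at h1
  omega

open Matrix in
lemma mem_span_liftRow (h : k ≤ v) (A : Matrix (Fin k) (Fin (v - k)) K) {x : Fin v → K}
    (hx : tailProj K k v x = headProj K h x ᵥ* A) :
    x ∈ Submodule.span K (Set.range (liftRow A)) := by
  have hsum : x = ∑ i, headProj K h x i • liftRow A i := by
    ext j
    rw [Finset.sum_apply]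
    by_cases hj : (j : ℕ) < k
    · rw [Finset.sum_eq_single ⟨j, hj⟩]
      · simp [liftRow, hj, headProj, LinearMap.funLeft_apply]
      · intro i _ hi
        have : (i : ℕ) ≠ j := fun h => hi (Fin.ext h)
        simp [liftRow, hj, this]
      · simp
    · have hj' : (j : ℕ) - k < v - k := by omega
      have h1 := congrFun hx ⟨j - k, hj'⟩
      have h2 : (⟨k + (j - k), by omega⟩ : Fin v) = j := Fin.ext (by simp; omega)
      simp only [tailProj, LinearMap.funLeft_apply, h2] at h1
      rw [h1]
      simp [liftRow, hj, hj', vecMul, dotProduct]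
  rw [hsum]
  exact Submodule.sum_mem _ fun i _ =>
    Submodule.smul_mem _ _ (Submodule.subset_span ⟨i, rfl⟩)

lemma IsLMRD.ncard_le {q d : ℕ} [Finite K] {M : Set (Submodule K (Fin v → K))}
    (hM : IsLMRD q K v d k M) : M.ncard ≤ q ^ ((v - k) * (k - d / 2 + 1)) := by
  obtain ⟨R, hR, -, rfl⟩ := hM
  rw [← hR]
  have h : {U | ∃ A ∈ R, U = Submodule.span K (Set.range (liftRow (v := v) A))} =
      (fun A => Submodule.span K (Set.range (liftRow (v := v) A))) '' R := by
    ext U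
    simp [eq_comm]
  rw [h]
  exact Set.ncard_image_le (Set.toFinite R)

/-- A lifted MRD code covers every tuple of `k - d / 2 + 1` vectors whose heads are independent. -/
lemma IsLMRD.exists_mem [Fintype K] {d : ℕ} {M : Set (Submodule K (Fin v → K))}
    (hM : IsLMRD (Fintype.card K) K v d k M) (h : k ≤ v) (hdk : d / 2 ≤ k)
    {t : Fin (k - d / 2 + 1) → Fin v → K} (ht : LinearIndependent K (headProj K h ∘ t)) :
    ∃ W ∈ M, ∀ i, t i ∈ W := by
  obtain ⟨R, hR, hrank, rfl⟩ := hM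
  let B : Matrix (Fin (k - d / 2 + 1)) (Fin k) K := Matrix.of (headProj K h ∘ t)
  let T : Matrix (Fin (k - d / 2 + 1)) (Fin (v - k)) K := Matrix.of (tailProj K k v ∘ t)
  have hB : B.rank = k - d / 2 + 1 := by
    have h1 : LinearIndependent K B.row := ht
    simpa using h1.rank_matrix
  have hinj : Set.InjOn (fun A => B * A) R := by
    intro A hA A' hA' hAA'
    by_contra hne
    have h1 : B * (A - A') = 0 := by
      rw [Matrix.mul_sub]
      exact sub_eq_zero.2 hAA'
    have h2 := Matrix.rank_add_rank_le_card_of_mul_eq_zero h1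
    have h3 := hrank A hA A' hA' hne
    rw [hB, Fintype.card_fin] at h2
    omega
  have himage : (fun A => B * A) '' R = Set.univ := by
    refine Set.eq_of_subset_of_ncard_le (Set.subset_univ _) ?_
    rw [hinj.ncard_image, hR, Set.ncard_univ,
      Module.natCard_eq_pow_finrank (K := K), Module.finrank_matrix]
    simp [mul_comm]
  obtain ⟨A, hA, hAT⟩ : T ∈ (fun A => B * A) '' R := himage ▸ Set.mem_univ T
  refine ⟨_, ⟨A, hA, rfl⟩, fun i => mem_span_liftRow h A ?_⟩
  exact (congrFun hAT i).symm

lemma exists_linearIndependent_comp {V V' : Type*} [AddCommGroup V] [Module K V]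
    [FiniteDimensional K V] [AddCommGroup V'] [Module K V'] (f : V →ₗ[K] V') {U : Submodule K V}
    {m : ℕ} (hm : m + finrank K ↥(U ⊓ LinearMap.ker f) ≤ finrank K U) :
    ∃ t : Fin m → V, (∀ i, t i ∈ U) ∧ LinearIndependent K (f ∘ t) := by
  have h := finrank_map_add_finrank_inf_ker f U
  obtain ⟨s, hs⟩ := exists_linearIndependent_of_le_finrank
    (by omega : m ≤ finrank K (U.map f))
  choose t htU ht using fun i => Submodule.mem_map.1 (s i).2
  refine ⟨t, htU, ?_⟩
  have h1 : f ∘ t = (U.map f).subtype ∘ s := funext ht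
  rw [h1]
  exact hs.map' _ (Submodule.ker_subtype _)

lemma IsLMRD.le_finrank_inf_ker [Fintype K] {d : ℕ} {C M : Set (Submodule K (Fin v → K))}
    (hM : IsLMRD (Fintype.card K) K v d k M) (hC : IsCDC K v d k C) (hMC : M ⊆ C) (h : k ≤ v)
    (hd : Even d) (hdk : d / 2 ≤ k) {U : Submodule K (Fin v → K)}
    (hU : U ∈ C) (hUM : U ∉ M) : d / 2 ≤ finrank K ↥(U ⊓ LinearMap.ker (headProj K h)) := by
  by_contra! hlt
  have hk := hC.1 U hU
  obtain ⟨t, htU, ht⟩ := exists_linearIndependent_comp (headProj K h) (U := U)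
    (m := k - d / 2 + 1) (by omega)
  obtain ⟨W, hW, htW⟩ := hM.exists_mem h hdk ht
  have h1 := hC.two_mul_finrank_inf_le hU (hMC hW) fun h => hUM (h ▸ hW)
  have h2 := le_finrank_of_linearIndependent_mem (LinearIndependent.of_comp _ ht)
    (U := U ⊓ W) fun i => ⟨htU i, htW i⟩
  have h3 := Nat.two_mul_div_two_of_even hd
  omega

end Lifted

/-- the LMRD bound for `d ≤ k < 3d/2`. -/
theorem stmt10 (q : ℕ) (K : Type) [Field K] [Fintype K] (hq : Fintype.card K = q)
    (v d k : ℕ) (hd : Even d) (hd2 : 2 ≤ d / 2) (hdk : d / 2 ≤ k) (hkv : 2 * k ≤ v)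
    (hdlek : d ≤ k) (hk3d : 2 * k < 3 * d)
    (C M : Set (Submodule K (Fin v → K)))
    (hC : IsCDC K v (d : ℤ) (k : ℤ) C) (hM : IsLMRD q K v d k M) (hMC : M ⊆ C) :
    (C.ncard : ℚ) ≤ (q : ℚ) ^ ((v - k) * (k - d / 2 + 1))
      + (Amax K (v - k) (3 * (d : ℤ) - 2 * (k : ℤ)) (d : ℤ) : ℚ)
      + qBin q ((v : ℤ) - k) ((d : ℤ) / 2) * qBin q (k : ℤ) ((d : ℤ) - 1)
          * (q : ℚ) ^ (((k : ℤ) - d + 1) * ((v : ℤ) - k - (d : ℤ) / 2))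
          / qBin q ((k : ℤ) - (d : ℤ) / 2) ((d : ℤ) / 2 - 1) := by
  subst hq
  set q := Fintype.card K
  have hq2 : 2 ≤ q := Fintype.one_lt_card
  have hq1 : (1 : ℚ) < q := by exact_mod_cast hq2
  have hkv' : k ≤ v := by omega
  obtain ⟨b, hb⟩ := hd
  obtain ⟨a, rfl⟩ : ∃ a, b = a + 1 := ⟨b - 1, by omega⟩
  obtain ⟨e, he⟩ : ∃ e, k = 2 * a + 1 + (e + 1) := ⟨k - d, by omega⟩
  obtain ⟨w, hw⟩ : ∃ w, v = a + 1 + w + k := ⟨v - k - (a + 1), by omega⟩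
  have hda : d / 2 = a + 1 := by omega
  have hG := finrank_ker_headProj (K := K) hkv'
  set f := headProj K hkv'
  have hinf : ∀ U ∈ C, ∀ W ∈ C, U ≠ W → 2 * finrank K ↥(U ⊓ W) + d ≤ 2 * k :=
    fun U hU W hW h => hC.two_mul_finrank_inf_le hU hW h
  let C₁ := {U ∈ C \ M | d ≤ finrank K ↥(U ⊓ LinearMap.ker f)}
  let C₂ := {U ∈ C \ M | ¬ d ≤ finrank K ↥(U ⊓ LinearMap.ker f)}
  have hcover : C.ncard ≤ M.ncard + C₁.ncard + C₂.ncard := by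
    have h : C ⊆ M ∪ C₁ ∪ C₂ := by
      intro U hU
      by_cases h1 : U ∈ M
      · exact Or.inl (Or.inl h1)
      · by_cases h2 : d ≤ finrank K ↥(U ⊓ LinearMap.ker f)
        · exact Or.inl (Or.inr ⟨⟨hU, h1⟩, h2⟩)
        · exact Or.inr ⟨⟨hU, h1⟩, h2⟩
    exact (Set.ncard_le_ncard h).trans ((Set.ncard_union_le _ _).trans
      (Nat.add_le_add_right (Set.ncard_union_le _ _) _))
  have h₁ : C₁.ncard ≤ Amax K (v - k) (3 * (d : ℤ) - 2 * (k : ℤ)) (d : ℤ) := by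
    refine ncard_le_Amax_of_le_finrank_inf hG (fun U hU => hU.2) (fun U hU W hW h => ?_)
      fun U hU W hW h => ?_
    · have := hinf U hU.1.1 W hW.1.1 h
      omega
    · have := hinf U hU.1.1 W hW.1.1 h
      omega
  have h₂ := ncard_mul_le_ncard_adaptedTuples f (a := a + 1) (m := e + 1) (k := k) (C := C₂)
    (by omega) (fun U hU => by exact_mod_cast hC.1 U hU.1.1)
    (fun U hU => hda ▸ hM.le_finrank_inf_ker hC hMC hkv' ⟨_, hb⟩ hdk hU.1.1 hU.1.2)
    (fun U hU => by have := hU.2; omega)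
    fun U hU W hW h => by
      have := hinf U hU.1.1 W hW.1.1 h
      omega
  have htop : finrank K ↥((⊤ : Submodule K (Fin v → K)) ⊓ LinearMap.ker f) = a + 1 + w := by
    rw [top_inf_eq, hG]
    omega
  have hv : finrank K (⊤ : Submodule K (Fin v → K)) = a + 1 + w + (2 * a + 1 + (e + 1)) := by
    rw [finrank_top, finrank_fintype_fun_eq_card, Fintype.card_fin]
    omega
  rw [ncard_adaptedTuples f ⊤ (by omega) (by omega), htop, hv,
    show k = a + 1 + (a + (e + 1)) by omega] at h₂
  have hpos := mul_pos (prod_pow_sub_pow_pos hq1 (c := 0) (by omega : 0 + (a + 1) ≤ a + 1))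
    (prod_pow_sub_pow_pos hq1 (by omega : a + 1 + (e + 1) ≤ a + 1 + (a + (e + 1))))
  simp only [zero_add] at hpos
  rw [← le_div_iff₀ hpos, ← adapted_count_ratio hq2] at h₂
  have e1 : (v : ℤ) - k = ((a + 1 + w : ℕ) : ℤ) := by omega
  have e2 : (d : ℤ) / 2 = ((a + 1 : ℕ) : ℤ) := by omega
  have e3 : (d : ℤ) - 1 = ((2 * a + 1 : ℕ) : ℤ) := by omega
  have e4 : ((k : ℤ) - d + 1) * (((a + 1 + w : ℕ) : ℤ) - ((a + 1 : ℕ) : ℤ)) =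
      (((e + 1) * w : ℕ) : ℤ) := by
    rw [Nat.cast_mul]
    congr 1 <;> omega
  have e5 : (k : ℤ) - ((a + 1 : ℕ) : ℤ) = ((a + (e + 1) : ℕ) : ℤ) := by omega
  have e6 : ((a + 1 : ℕ) : ℤ) - 1 = (a : ℤ) := by omega
  have e7 : (k : ℤ) = ((2 * a + 1 + (e + 1) : ℕ) : ℤ) := by omega
  have hM' : (M.ncard : ℚ) ≤ (q : ℚ) ^ ((v - k) * (k - d / 2 + 1)) := by
    exact_mod_cast hM.ncard_le
  have h₁' : (C₁.ncard : ℚ) ≤ Amax K (v - k) (3 * (d : ℤ) - 2 * (k : ℤ)) (d : ℤ) := by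
    exact_mod_cast h₁
  have hcover' : (C.ncard : ℚ) ≤ M.ncard + C₁.ncard + C₂.ncard := by exact_mod_cast hcover
  refine hcover'.trans (add_le_add (add_le_add hM' h₁') (h₂.trans_eq ?_))
  rw [e1, e2, e3, e4, e5, e6, e7, zpow_natCast]
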